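/- arXiv:1409.8423 — 2 statements merged into one kernel-verified Lean document; each statement's English description precedes it below -/
import Mathlib

section
/- Let A ∈ ℤ∖{0,±1} be a cube-free integer, let α ∈ ℤ[ζ₃] be a nonzero cube-free integer, and let q be a prime element of ℤ[ζ₃] such that q‖A (q divides A but q² does not), q does not divide 3, and q‖α (q divides α but q² does not). Then C_{A,α}(k_q) ≠ ∅ if and only if the image of (A/q)·(α/q)⁻¹ in the residue field 𝔽_q = ℤ[ζ₃]/(q) is a cube; equivalently, there exists β ∈ ℤ[ζ₃] with A/q ≡ β³·(α/q) (mod q). -/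
open NumberField IsDedekindDomain

/-- The height-one prime of a Dedekind domain determined by a prime element. -/
noncomputable def primeSpec {R : Type*} [CommRing R] [IsDomain R] [IsDedekindDomain R]
    {q : R} (hq : Prime q) : HeightOneSpectrum R where
  asIdeal := Ideal.span {q}
  isPrime := (Ideal.span_singleton_prime hq.ne_zero).mpr hq
  ne_bot := by simpa [Ne, Ideal.span_singleton_eq_bot] using hq.ne_zero

/-!
If `v (α²)` is not an `n`-th power in the value group, as for a uniformizer `α` and `n > 2`, then
no point of `α xⁿ + α⁻¹ yⁿ = a zⁿ` has `z = 0`, and scaling to `z = 1` gives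
`yⁿ = α² (a / α - xⁿ)`. Hence `v (a / α - xⁿ)` is not an `n`-th power either, which forces the
unit `a / α` to be congruent to `xⁿ` modulo the maximal ideal. Conversely, if `n` is a unit,
Hensel's lemma lifts such a congruence to an equality `a / α = tⁿ`, and `(t, 0, 1)` is a point.
-/

section Valuation

open Valued WithZero

variable {S Γ₀ : Type*} [LinearOrderedCommGroupWithZero Γ₀]

lemma valuation_pow_sub_pow_le [CommRing S] (v : Valuation S Γ₀) {x y : S} (hx : v x ≤ 1)
    (hy : v y ≤ 1) (n : ℕ) : v (x ^ n - y ^ n) ≤ v (x - y) :=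
  (Valuation.integer.integers v).le_of_dvd
    (sub_dvd_pow_sub_pow (⟨x, hx⟩ : v.integer) ⟨y, hy⟩ n)

lemma valuation_eq_one_of_sub_pow_lt_one [Ring S] (v : Valuation S Γ₀) {n : ℕ} (hn : n ≠ 0)
    {c t : S} (hc : v c = 1) (h : v (c - t ^ n) < 1) : v t = 1 := by
  have hpow : v (t ^ n) = 1 := by
    simpa [hc] using v.map_sub_eq_of_lt_right (x := c - t ^ n) (y := c) (hc ▸ h)
  exact (pow_eq_one_iff_of_nonneg zero_le hn).mp (v.map_pow t n ▸ hpow)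

lemma valuation_sub_pow_lt_one_or_eq_pow [Ring S] (v : Valuation S Γ₀) {n : ℕ} (hn : n ≠ 0)
    {c : S} (hc : v c = 1) (t : S) :
    v (c - t ^ n) < 1 ∨ ∃ w, v w ≠ 0 ∧ v (c - t ^ n) = v w ^ n := by
  rcases le_or_gt (v t) 1 with ht | ht
  · have hle : v (c - t ^ n) ≤ 1 := v.map_sub_le hc.le (by simpa using pow_le_one' ht n)
    exact hle.lt_or_eq.imp_right fun h => ⟨1, by simp, by simpa using h⟩
  · have hlt : v c < v (t ^ n) := by simpa [hc] using one_lt_pow₀ ht hn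
    exact .inr ⟨t, (zero_lt_one.trans ht).ne', by rw [v.map_sub_eq_of_lt_right hlt, map_pow]⟩

lemma pow_ne_exp_neg_one_sq {n : ℕ} (hn : 2 < n) (x : ℤᵐ⁰) : x ^ n ≠ exp (-1) ^ 2 := by
  intro h
  have hlog := congrArg log h
  simp only [log_pow, log_exp, nsmul_eq_mul] at hlog
  have hdvd : (n : ℤ) ∣ 2 := ⟨-log x, by push_cast at hlog; linarith⟩
  exact hn.not_ge (Nat.le_of_dvd two_pos (by exact_mod_cast hdvd))

lemma isOpen_setOf_valued_sub_lt_one [Ring S] [Valued S Γ₀] (t : S) :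
    IsOpen {s | v (t - s) < 1} := by
  simpa only [Set.preimage_ofPred_eq, Valuation.restrict_lt_one_iff] using
    (isOpen_ball S 1).preimage (continuous_sub_left t)

end Valuation

section Hensel

open Valued Polynomial

lemma exists_pow_eq_of_pow_sub_mem_maximalIdeal {S : Type*} [CommRing S] [HenselianLocalRing S]
    {n : ℕ} (hn : IsUnit (n : S)) {c t : S} (ht : IsUnit t)
    (h : t ^ n - c ∈ IsLocalRing.maximalIdeal S) : ∃ x, x ^ n = c := by
  have hn0 : n ≠ 0 := by
    rintro rfl
    simp at hn
  have hderiv : IsUnit ((X ^ n - C c).derivative.eval t) := by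
    simpa [derivative_X_pow] using And.intro hn (ht.pow (n - 1))
  obtain ⟨x, hx, -⟩ := HenselianLocalRing.is_henselian (X ^ n - C c)
    (monic_X_pow_sub_C c hn0) t (by simpa using h) hderiv
  exact ⟨x, by simpa [sub_eq_zero] using hx⟩

variable {L Γ₀ : Type*} [Field L] [LinearOrderedCommGroupWithZero Γ₀] [Valued L Γ₀]

lemma mem_span_singleton_pow_iff_valued_le {ϖ x : 𝒪[L]} {n : ℕ} :
    x ∈ Ideal.span {ϖ} ^ n ↔ v (x : L) ≤ v ((ϖ : L) ^ n) := by
  rw [Ideal.span_singleton_pow, Ideal.mem_span_singleton,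
    (Valuation.integer.integers v).dvd_iff_le]
  rfl

lemma isAdic_span_singleton [MulArchimedean Γ₀] {ϖ : 𝒪[L]} (hϖ0 : ϖ ≠ 0)
    (hϖ1 : v (ϖ : L) < 1) : IsAdic (Ideal.span {ϖ}) := by
  refine isAdic_iff.mpr ⟨fun n => ?_, fun s hs => ?_⟩
  · have hr : v.restrict ((ϖ : L) ^ n) ≠ 0 := by simp [hϖ0]
    convert! (isOpen_closedBall L hr).preimage continuous_subtype_val using 1
    ext x
    simp only [SetLike.mem_coe, Set.mem_preimage, Set.mem_ofPred_eq,
      mem_span_singleton_pow_iff_valued_le, Valuation.restrict_le_iff]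
  · obtain ⟨u, hu, hus⟩ := (mem_nhds_subtype _ _ _).mp hs
    obtain ⟨γ, hγ⟩ := Valued.mem_nhds_zero.mp hu
    obtain ⟨n, hn⟩ := exists_pow_lt₀ hϖ1
      (Units.mk0 _ (MonoidWithZeroHom.ValueGroup₀.embedding_unit_ne_zero γ))
    refine ⟨n, fun x hx => hus (hγ ?_)⟩
    rw [SetLike.mem_coe, mem_span_singleton_pow_iff_valued_le, map_pow] at hx
    exact Valuation.restrict_lt_iff_lt_embedding _ |>.mpr (hx.trans_lt hn)

lemma isAdicComplete_span_singleton [MulArchimedean Γ₀] [CompleteSpace L] {ϖ : 𝒪[L]}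
    (hϖ0 : ϖ ≠ 0) (hϖ1 : v (ϖ : L) < 1) : IsAdicComplete (Ideal.span {ϖ}) 𝒪[L] := by
  have : IsUniformAddGroup 𝒪[L] := 𝒪[L].toAddSubgroup.isUniformAddGroup
  exact (isAdic_span_singleton hϖ0 hϖ1).isAdicComplete_iff.mpr
    ⟨(isClosed_integer L).completeSpace_coe, inferInstance⟩

variable (L) in
theorem henselianLocalRing_integer [MulArchimedean Γ₀] [CompleteSpace L] :
    HenselianLocalRing 𝒪[L] where
  is_henselian f hf a ha ha' := by
    -- The ring is complete for the ideal generated by `f.eval a` itself, unless it vanishes.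
    by_cases h0 : f.eval a = 0
    · exact ⟨a, h0, by simp⟩
    have hlt : v ((f.eval a : 𝒪[L]) : L) < 1 :=
      Valuation.Integer.not_isUnit_iff_valuation_lt_one.mp ha
    have := isAdicComplete_span_singleton h0 hlt
    obtain ⟨b, hb, hba⟩ := HenselianRing.is_henselian (I := Ideal.span {f.eval a}) f hf a
      (Ideal.mem_span_singleton_self _) (ha'.map _)
    exact ⟨b, hb, (Ideal.span_singleton_le_iff_mem _).mpr ha hba⟩

theorem exists_pow_eq_of_valued_sub_pow_lt_one [MulArchimedean Γ₀] [CompleteSpace L] {n : ℕ}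
    (hn : v (n : L) = 1) {c t : L} (hc : v c = 1) (h : v (c - t ^ n) < 1) : ∃ x, x ^ n = c := by
  have := henselianLocalRing_integer L
  have hO := Valuation.integer.integers (v : Valuation L Γ₀)
  have hn0 : n ≠ 0 := by
    rintro rfl
    simp at hn
  have ht : v t = 1 := valuation_eq_one_of_sub_pow_lt_one v hn0 hc h
  obtain ⟨x, hx⟩ := exists_pow_eq_of_pow_sub_mem_maximalIdeal (S := 𝒪[L]) (n := n)
    (c := ⟨c, hc.le⟩) (t := ⟨t, ht.le⟩) (hO.isUnit_of_one' (by simpa using hn))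
    (hO.isUnit_of_one' ht)
    (Valuation.Integer.not_isUnit_iff_valuation_lt_one.mpr (by simpa [v.map_sub_swap] using h))
  exact ⟨x, congrArg Subtype.val hx⟩

end Hensel

section FermatCurve

open Valued

/-- The plane curve `α xⁿ + α⁻¹ yⁿ = a zⁿ` has an `L`-rational point. For `n = 3` this is the
curve `C_{a,α}`. -/
def HasFermatPoint {L : Type*} [Field L] (n : ℕ) (a α : L) : Prop :=
  ∃ x y z : L, ¬(x = 0 ∧ y = 0 ∧ z = 0) ∧ α * x ^ n + α⁻¹ * y ^ n = a * z ^ n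

variable {L Γ₀ : Type*} [Field L] [LinearOrderedCommGroupWithZero Γ₀]

lemma hasFermatPoint_of_pow_eq_div {n : ℕ} (hn : n ≠ 0) {a α t : L} (hα : α ≠ 0)
    (ht : t ^ n = a / α) : HasFermatPoint n a α :=
  ⟨t, 0, 1, by simp, by simp [ht, hn, mul_div_cancel₀ _ hα]⟩

theorem HasFermatPoint.exists_valuation_sub_pow_lt_one (v : Valuation L Γ₀) {n : ℕ} (hn : n ≠ 0)
    {a α : L} (hα : ∀ x, v x ^ n ≠ v α ^ 2) (ha : v a = v α) (h : HasFermatPoint n a α) :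
    ∃ t, v (a / α - t ^ n) < 1 := by
  obtain ⟨x, y, z, hne, hxyz⟩ := h
  have hα0 : α ≠ 0 := by
    rintro rfl
    exact hα 0 (by simp [hn])
  have hc : v (a / α) = 1 := by simp [ha, hα0]
  have hy : y ^ n = α ^ 2 * (a / α * z ^ n - x ^ n) := by
    field_simp at hxyz ⊢
    linear_combination hxyz
  have hz : z ≠ 0 := by
    rintro rfl
    have hx : x ≠ 0 := by
      rintro rfl
      simp_all
    refine hα (y / x) ?_
    rw [← map_pow, div_pow, hy]
    simp [hx, hn]
  refine ⟨x / z, (valuation_sub_pow_lt_one_or_eq_pow v hn hc (x / z)).resolve_right ?_⟩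
  rintro ⟨w, hw, hvw⟩
  refine hα (y / z / w) ?_
  have hyz : (y / z) ^ n = α ^ 2 * (a / α - (x / z) ^ n) := by
    rw [div_pow, div_pow, hy]
    field_simp
  rw [map_div₀, div_pow, ← map_pow, hyz, map_mul, hvw, map_pow,
    mul_div_cancel_right₀ _ (pow_ne_zero n hw)]

theorem hasFermatPoint_iff_exists_valued_sub_pow_lt_one [MulArchimedean Γ₀] [Valued L Γ₀]
    [CompleteSpace L] {n : ℕ} (hn : v (n : L) = 1) {a α : L} (hα : ∀ x : L, v x ^ n ≠ v α ^ 2)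
    (ha : v a = v α) : HasFermatPoint n a α ↔ ∃ t, v (a / α - t ^ n) < 1 := by
  have hn0 : n ≠ 0 := by
    rintro rfl
    simp at hn
  have hα0 : α ≠ 0 := by
    rintro rfl
    exact hα 0 (by simp [hn0])
  refine ⟨fun h => h.exists_valuation_sub_pow_lt_one v hn0 hα ha, fun ⟨t, ht⟩ => ?_⟩
  have hc : v (a / α) = 1 := by simp [ha, hα0]
  obtain ⟨x, hx⟩ := exists_pow_eq_of_valued_sub_pow_lt_one hn hc ht
  exact hasFermatPoint_of_pow_eq_div hn0 hα0 hx

end FermatCurve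

section AdicCompletion

open Valued WithZero

variable {R K : Type*} [CommRing R] [IsDedekindDomain R] [Field K] [Algebra R K]
  [IsFractionRing R K] (𝔭 : HeightOneSpectrum R)

lemma valued_algebraMap_adicCompletion (r : R) :
    v (algebraMap R (𝔭.adicCompletion K) r) = 𝔭.intValuation r :=
  (𝔭.valuedAdicCompletion_eq_valuation r).trans (𝔭.valuation_of_algebraMap r)

lemma exists_valued_sub_algebraMap_lt_one {t : 𝔭.adicCompletion K} (ht : v t ≤ 1) :
    ∃ γ : R, v (t - algebraMap R (𝔭.adicCompletion K) γ) < 1 := by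
  have hopen : IsOpen {s | v (t - s) < 1} := isOpen_setOf_valued_sub_lt_one t
  obtain ⟨k, hk : v (t - algebraMap K (𝔭.adicCompletion K) k) < 1⟩ :=
    (HeightOneSpectrum.denseRange_algebraMap K 𝔭).exists_mem_open hopen ⟨t, by simp⟩
  have hvk (k : K) : v (algebraMap K (𝔭.adicCompletion K) k) = 𝔭.valuation K k :=
    𝔭.valuedAdicCompletion_eq_valuation' k
  have hk1 : 𝔭.valuation K k ≤ 1 := by
    simpa [hvk] using v.map_sub_le ht hk.le
  obtain ⟨γ, hγ⟩ := 𝔭.exists_valuation_sub_lt_of_integer hk1 1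
  refine ⟨γ, ?_⟩
  rw [← hvk, map_sub, ← IsScalarTower.algebraMap_apply, v.map_sub_swap] at hγ
  simpa using v.map_add_lt hk hγ

theorem exists_valued_sub_pow_lt_one_iff {n : ℕ} (hn : n ≠ 0) {c : 𝔭.adicCompletion K}
    (hc : v c = 1) : (∃ t, v (c - t ^ n) < 1) ↔
      ∃ γ : R, v (c - algebraMap R (𝔭.adicCompletion K) γ ^ n) < 1 := by
  refine ⟨fun ⟨t, ht⟩ => ?_, fun ⟨γ, hγ⟩ => ⟨_, hγ⟩⟩
  have ht1 : v t ≤ 1 := (valuation_eq_one_of_sub_pow_lt_one v hn hc ht).le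
  obtain ⟨γ, hγ⟩ := exists_valued_sub_algebraMap_lt_one 𝔭 ht1
  have hγ1 : v (algebraMap R (𝔭.adicCompletion K) γ) ≤ 1 := by
    simpa using v.map_sub_le ht1 hγ.le
  refine ⟨γ, ?_⟩
  simpa using v.map_add_lt ht ((valuation_pow_sub_pow_le v ht1 hγ1 n).trans_lt hγ)

lemma valued_div_sub_pow_lt_one_iff {a α : R} {m : ℤ} (hα : 𝔭.intValuation α = exp m) (γ : R)
    (n : ℕ) :
    v (algebraMap R (𝔭.adicCompletion K) a / algebraMap R (𝔭.adicCompletion K) α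
        - algebraMap R (𝔭.adicCompletion K) γ ^ n) < 1 ↔
      𝔭.intValuation (a - γ ^ n * α) < exp m := by
  have hvα : v (algebraMap R (𝔭.adicCompletion K) α) = exp m := by
    rw [valued_algebraMap_adicCompletion, hα]
  have hα0 : algebraMap R (𝔭.adicCompletion K) α ≠ 0 := v.ne_zero_iff.mp (by simp [hvα])
  rw [div_sub' hα0, map_div₀, hvα, div_lt_one₀ (by simp),
    ← valued_algebraMap_adicCompletion (K := K)]
  simp [mul_comm]

variable (K) in
theorem hasFermatPoint_iff_exists_intValuation_sub_pow_mul_lt {n : ℕ} (hn : 2 < n)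
    (hn𝔭 : (n : R) ∉ 𝔭.asIdeal) {a α : R}
    (ha : 𝔭.intValuation a = exp (-1)) (hα : 𝔭.intValuation α = exp (-1)) :
    HasFermatPoint n (algebraMap R (𝔭.adicCompletion K) a)
        (algebraMap R (𝔭.adicCompletion K) α) ↔
      ∃ γ : R, 𝔭.intValuation (a - γ ^ n * α) < exp (-1) := by
  have hva := (valued_algebraMap_adicCompletion (K := K) 𝔭 a).trans ha
  have hvα := (valued_algebraMap_adicCompletion (K := K) 𝔭 α).trans hα
  have hvn : v (n : 𝔭.adicCompletion K) = 1 := by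
    rw [← map_natCast (algebraMap R _), valued_algebraMap_adicCompletion,
      HeightOneSpectrum.intValuation_eq_one_iff]
    exact hn𝔭
  rw [hasFermatPoint_iff_exists_valued_sub_pow_lt_one hvn
      (fun x => hvα ▸ pow_ne_exp_neg_one_sq hn (v x)) (hva.trans hvα.symm),
    exists_valued_sub_pow_lt_one_iff 𝔭 (by omega) (by simp [hva, hvα])]
  simp only [valued_div_sub_pow_lt_one_iff 𝔭 hα]

end AdicCompletion

section PrimeSpec

open WithZero

variable {R : Type*} [CommRing R] [IsDedekindDomain R] {q : R} (hq : Prime q)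

lemma intValuation_primeSpec_mul (r : R) :
    (primeSpec hq).intValuation (q * r) = exp (-1) * (primeSpec hq).intValuation r := by
  rw [map_mul, (primeSpec hq).intValuation_singleton hq.ne_zero rfl]

lemma mem_primeSpec_asIdeal {r : R} : r ∈ (primeSpec hq).asIdeal ↔ q ∣ r :=
  Ideal.mem_span_singleton

lemma intValuation_primeSpec_mul_eq_exp_neg_one_iff {r : R} :
    (primeSpec hq).intValuation (q * r) = exp (-1) ↔ ¬ q ∣ r := by
  rw [intValuation_primeSpec_mul, mul_eq_left₀ exp_ne_zero,
    HeightOneSpectrum.intValuation_eq_one_iff, mem_primeSpec_asIdeal]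

lemma intValuation_primeSpec_mul_lt_exp_neg_one_iff {r : R} :
    (primeSpec hq).intValuation (q * r) < exp (-1) ↔ q ∣ r := by
  rw [intValuation_primeSpec_mul, mul_lt_iff_lt_one_right (by simp),
    HeightOneSpectrum.intValuation_lt_one_iff_mem, mem_primeSpec_asIdeal]

variable (K : Type*) [Field K] [Algebra R K] [IsFractionRing R K]

theorem stmt3_general {n : ℕ} (hn : 2 < n) (hqn : ¬ q ∣ (n : R)) {b β : R} (hb : ¬ q ∣ b)
    (hβ : ¬ q ∣ β) :
    HasFermatPoint n (algebraMap R ((primeSpec hq).adicCompletion K) (q * b))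
        (algebraMap R ((primeSpec hq).adicCompletion K) (q * β)) ↔
      ∃ γ, q ∣ b - γ ^ n * β := by
  have hsub (γ : R) : q * b - γ ^ n * (q * β) = q * (b - γ ^ n * β) := by ring
  rw [hasFermatPoint_iff_exists_intValuation_sub_pow_mul_lt K (primeSpec hq) hn
    ((mem_primeSpec_asIdeal hq).not.mpr hqn)
    ((intValuation_primeSpec_mul_eq_exp_neg_one_iff hq).mpr hb)
    ((intValuation_primeSpec_mul_eq_exp_neg_one_iff hq).mpr hβ)]
  simp only [hsub, intValuation_primeSpec_mul_lt_exp_neg_one_iff]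

end PrimeSpec

/-- Lemma 2.3, case `q ‖ α`: if `A ∈ ℤ ∖ {0, ±1}` is cube-free,
`α ∈ ℤ[ζ₃]` is a nonzero cube-free integer, and `q` is a prime of `ℤ[ζ₃]` with `q ‖ A`,
`q ∤ 3` and `q ‖ α`, say `A = q·B` and `α = q·β` with `q ∤ B`, `q ∤ β`, then
`C_{A,α}(k_q) ≠ ∅` iff the image of `(A/q)·(α/q)⁻¹` in the residue field `ℤ[ζ₃]/(q)` is a
cube, i.e. iff `B ≡ γ³·β (mod q)` for some `γ ∈ ℤ[ζ₃]`. -/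
theorem stmt3 (K : Type*) [Field K] [NumberField K] [IsCyclotomicExtension {3} ℚ K]
    (A : ℤ) (hA0 : A ≠ 0) (hA1 : A ≠ 1) (hA1' : A ≠ -1)
    (hAcf : ∀ p : ℤ, Prime p → ¬ p ^ 3 ∣ A)
    (α : 𝓞 K) (hα0 : α ≠ 0) (hαcf : ∀ p : 𝓞 K, Prime p → ¬ p ^ 3 ∣ α)
    (q : 𝓞 K) (hq : Prime q) (hq3 : ¬ q ∣ (3 : 𝓞 K))
    (B β : 𝓞 K)
    (hAB : (A : 𝓞 K) = q * B) (hqB : ¬ q ∣ B)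
    (hαβ : α = q * β) (hqβ : ¬ q ∣ β) :
    (∃ x y z : (primeSpec hq).adicCompletion K,
        ¬(x = 0 ∧ y = 0 ∧ z = 0) ∧
        algebraMap (𝓞 K) ((primeSpec hq).adicCompletion K) α * x ^ 3
          + (algebraMap (𝓞 K) ((primeSpec hq).adicCompletion K) α)⁻¹ * y ^ 3
          = algebraMap K ((primeSpec hq).adicCompletion K) (A : K) * z ^ 3)
      ↔ ∃ γ : 𝓞 K, q ∣ B - γ ^ 3 * β := by
  rw [map_intCast, ← map_intCast (algebraMap (𝓞 K) ((primeSpec hq).adicCompletion K)),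
    hAB, hαβ]
  exact stmt3_general hq K (by norm_num) (mod_cast hq3) hqB hqβ
end

section
/- Let A ∈ ℤ∖{0,±1} be a cube-free integer, let α ∈ ℤ[ζ₃] be a nonzero cube-free integer, and let p be a rational prime with p ≡ 2 (mod 3) (so p remains prime in ℤ[ζ₃]) such that p‖A (p divides A but p² does not). Let v_p(α) ∈ {0,1,2} be the p-adic valuation of α in ℤ[ζ₃]. Then C_{A,α}(k_p) ≠ ∅ if and only if the image of α·p^{-v_p(α)} in the residue field ℤ[ζ₃]/(p) ≅ 𝔽_{p²} is a cube. -/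
open NumberField IsDedekindDomain

/-!
By Hensel's lemma, in a complete valued field where `3` is a unit, an element is determined modulo
cubes by its leading term. Since `p ≡ 2 (mod 3)`, every element of `𝔽_p` is a cube, so `A` is `p`
times a cube of `k_p`, and only `m` modulo `3` matters: up to exchanging `x` with `y` and `β` with
`β⁻¹`, the curve is `β x³ + β⁻¹ y³ = p z³` or `p β x³ + (p β)⁻¹ y³ = p z³`. In both, exactly two of
the coefficients have valuations congruent modulo `3`. The corresponding terms of a solution must
then cancel to leading order, so the ratio of these coefficients, which is `β²` or `β`, is a cube;
and a unit of `k_p` is a cube exactly when its residue is.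
-/

section Hensel

variable {L Γ₀ : Type*} [Field L] [LinearOrderedCommGroupWithZero Γ₀] [MulArchimedean Γ₀]
  [hv : Valued L Γ₀]

theorem isAdic_span_singleton_integer {π : hv.v.integer} (hπ0 : π ≠ 0)
    (hπ1 : hv.v (π : L) < 1) : IsAdic (Ideal.span {π}) := by
  have mem_pow (n : ℕ) (x : hv.v.integer) :
      x ∈ Ideal.span {π} ^ n ↔ hv.v (x : L) ≤ hv.v (π : L) ^ n := by
    rw [Ideal.span_singleton_pow, Ideal.mem_span_singleton,
      (Valuation.integer.integers hv.v).dvd_iff_le, ← map_pow]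
    rfl
  refine isAdic_iff.mpr ⟨fun n ↦ ?_, fun s hs ↦ ?_⟩
  · have hπn : hv.v.restrict ((π : L) ^ n) ≠ 0 := by simp [hπ0]
    convert (Valued.isOpen_closedBall L hπn).preimage continuous_subtype_val using 1
    ext x
    simp [mem_pow, ← map_pow, Valuation.restrict_le_iff]
  · obtain ⟨t, ht, hts⟩ := mem_nhds_subtype _ _ _ |>.mp hs
    obtain ⟨γ, hγ⟩ := Valued.mem_nhds_zero.mp ht
    obtain ⟨n, hn⟩ := exists_pow_lt₀ hπ1
      (Units.map (MonoidWithZeroHom.ValueGroup₀.embedding (f := .ofClass hv.v)) γ)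
    refine ⟨n, fun x hx ↦ hts (hγ ?_)⟩
    exact (Valuation.restrict_lt_iff_lt_embedding _).mpr (((mem_pow n x).mp hx).trans_lt hn)

theorem isAdicComplete_span_singleton_integer [CompleteSpace L] {π : hv.v.integer}
    (hπ0 : π ≠ 0) (hπ1 : hv.v (π : L) < 1) :
    IsAdicComplete (Ideal.span {π}) hv.v.integer := by
  have : IsUniformAddGroup hv.v.integer :=
    inferInstanceAs (IsUniformAddGroup hv.v.integer.toAddSubgroup)
  have : CompleteSpace hv.v.integer := (Valued.isClosed_integer L).completeSpace_coe
  exact (isAdic_span_singleton_integer hπ0 hπ1).isAdicComplete_iff.mpr ⟨this, inferInstance⟩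

open Polynomial in
theorem exists_pow_eq_of_valuation_sub_one_lt_one [CompleteSpace L] {n : ℕ}
    (hn : hv.v (n : L) = 1) {u : L} (hu : hv.v (u - 1) < 1) : ∃ t : L, t ^ n = u := by
  obtain rfl | hu1 := eq_or_ne u 1
  · exact ⟨1, one_pow n⟩
  let π : hv.v.integer := ⟨u - 1, hu.le⟩
  have := isAdicComplete_span_singleton_integer (π := π)
    (by simpa [π, Subtype.ext_iff, sub_eq_zero] using hu1) hu
  have hn0 : n ≠ 0 := by rintro rfl; simp at hn
  have hn_unit : IsUnit (n : hv.v.integer) :=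
    (Valuation.integer.integers hv.v).isUnit_iff_valuation_eq_one.mpr (by simpa using hn)
  obtain ⟨t, ht, -⟩ := HenselianRing.is_henselian (I := Ideal.span {π})
    (X ^ n - C (π + 1)) (monic_X_pow_sub_C _ hn0) 1
    (by simp)
    (by simpa [derivative_X_pow] using hn_unit.map (Ideal.Quotient.mk (Ideal.span {π})))
  exact ⟨t, by simpa [IsRoot, π, sub_eq_zero, Subtype.ext_iff] using ht⟩

theorem exists_eq_mul_pow_of_valuation_sub_lt [CompleteSpace L] {n : ℕ}
    (hn : hv.v (n : L) = 1) {x y : L} (h : hv.v (x - y) < hv.v y) : ∃ t : L, x = y * t ^ n := by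
  have hy : y ≠ 0 := by rintro rfl; simp at h
  have hxy : hv.v (x / y - 1) < 1 := by
    rwa [div_sub_one hy, map_div₀, div_lt_one₀ (by simpa [zero_lt_iff] using hy)]
  obtain ⟨t, ht⟩ := exists_pow_eq_of_valuation_sub_one_lt_one hn hxy
  exact ⟨t, by rw [ht, mul_div_cancel₀ _ hy]⟩

end Hensel

section DiagonalCubic

variable {L : Type*} [Field L]

/-- The plane cubic curve `a x³ + b y³ = c z³` has a point over `L`, in homogeneous coordinates.
The curve `C_{A,α}` is the case `a = α`, `b = α⁻¹`, `c = A`. -/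
def DiagonalCubicHasPoint (a b c : L) : Prop :=
  ∃ x y z : L, ¬(x = 0 ∧ y = 0 ∧ z = 0) ∧ a * x ^ 3 + b * y ^ 3 = c * z ^ 3

namespace DiagonalCubicHasPoint

variable {a b c : L}

theorem swap (h : DiagonalCubicHasPoint a b c) : DiagonalCubicHasPoint b a c := by
  obtain ⟨x, y, z, h0, h⟩ := h
  exact ⟨y, x, z, by tauto, by rw [add_comm, h]⟩

theorem swap_iff : DiagonalCubicHasPoint a b c ↔ DiagonalCubicHasPoint b a c :=
  ⟨swap, swap⟩

theorem swap_right (h : DiagonalCubicHasPoint a b c) : DiagonalCubicHasPoint a (-c) (-b) := by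
  obtain ⟨x, y, z, h0, h⟩ := h
  exact ⟨x, z, y, by tauto, by linear_combination h⟩

theorem swap_right_iff : DiagonalCubicHasPoint a b c ↔ DiagonalCubicHasPoint a (-c) (-b) :=
  ⟨swap_right, fun h ↦ by simpa only [neg_neg] using h.swap_right⟩

theorem of_mul_cube {r s t : L} (hr : r ≠ 0) (hs : s ≠ 0) (ht : t ≠ 0)
    (h : DiagonalCubicHasPoint (a * r ^ 3) (b * s ^ 3) (c * t ^ 3)) :
    DiagonalCubicHasPoint a b c := by
  obtain ⟨x, y, z, h0, h⟩ := h
  exact ⟨r * x, s * y, t * z, by simpa [hr, hs, ht] using h0, by linear_combination h⟩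

theorem mul_cube_iff {r s t : L} (hr : r ≠ 0) (hs : s ≠ 0) (ht : t ≠ 0) :
    DiagonalCubicHasPoint (a * r ^ 3) (b * s ^ 3) (c * t ^ 3) ↔ DiagonalCubicHasPoint a b c := by
  refine ⟨of_mul_cube hr hs ht, fun h ↦ ?_⟩
  refine of_mul_cube (inv_ne_zero hr) (inv_ne_zero hs) (inv_ne_zero ht) ?_
  field_simp
  exact h

theorem of_eq_mul_cube {t : L} (h : a = b * t ^ 3) : DiagonalCubicHasPoint a b c :=
  ⟨1, -t, 0, by simp, by rw [h]; ring⟩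

variable {Γ₀ : Type*} [LinearOrderedCommGroupWithZero Γ₀]

theorem valuation_add_lt_max (v : Valuation L Γ₀) (ha : a ≠ 0) (hab : v a = v b)
    (hc : ∀ s, v c ≠ v a * v s ^ 3) {x y z : L} (h0 : ¬(x = 0 ∧ y = 0 ∧ z = 0))
    (h : a * x ^ 3 + b * y ^ 3 = c * z ^ 3) :
    v (a * x ^ 3 + b * y ^ 3) < max (v (a * x ^ 3)) (v (b * y ^ 3)) := by
  refine (v.map_add _ _).lt_of_ne fun hmax ↦ ?_
  have hvx : v (a * x ^ 3) = v a * v x ^ 3 := by rw [map_mul, map_pow]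
  have hvy : v (b * y ^ 3) = v a * v y ^ 3 := by rw [map_mul, map_pow, hab]
  obtain ⟨s, hs⟩ : ∃ s, v (c * z ^ 3) = v a * v s ^ 3 := by
    rw [← h, hmax]
    rcases max_choice (v (a * x ^ 3)) (v (b * y ^ 3)) with hm | hm
    · exact ⟨x, hm.trans hvx⟩
    · exact ⟨y, hm.trans hvy⟩
  have hz : z = 0 := by
    by_contra hz
    refine hc (s / z) ?_
    rw [map_div₀, div_pow, mul_div_assoc', ← hs, map_mul, map_pow, mul_div_cancel_right₀]
    simpa using hz
  have hmax0 : max (v (a * x ^ 3)) (v (b * y ^ 3)) = 0 := by rw [← hmax, h, hz]; simp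
  have hx : x = 0 := by
    simpa [ha] using le_zero_iff.mp ((le_max_left _ _).trans_eq hmax0)
  have hb : b ≠ 0 := by rwa [← v.ne_zero_iff, ← hab, v.ne_zero_iff]
  have hy : y = 0 := by
    simpa [hb] using le_zero_iff.mp ((le_max_right _ _).trans_eq hmax0)
  exact h0 ⟨hx, hy, hz⟩

variable [MulArchimedean Γ₀] [hv : Valued L Γ₀] [CompleteSpace L]

theorem iff_exists_eq_mul_cube (h3 : hv.v (3 : L) = 1) (ha : a ≠ 0) (hab : hv.v a = hv.v b)
    (hc : ∀ s, hv.v c ≠ hv.v a * hv.v s ^ 3) :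
    DiagonalCubicHasPoint a b c ↔ ∃ t, a = b * t ^ 3 := by
  refine ⟨fun ⟨x, y, z, h0, h⟩ ↦ ?_, fun ⟨t, ht⟩ ↦ of_eq_mul_cube ht⟩
  have hlt := valuation_add_lt_max hv.v ha hab hc h0 h
  have heq : hv.v (a * x ^ 3) = hv.v (b * y ^ 3) := by
    by_contra hne
    exact hlt.ne (hv.v.map_add_of_distinct_val hne)
  rw [heq, max_self] at hlt
  have hx : x ≠ 0 := by
    rintro rfl
    simp [← heq] at hlt
  obtain ⟨t, ht⟩ := exists_eq_mul_pow_of_valuation_sub_lt (n := 3) (by exact_mod_cast h3)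
    (x := a * x ^ 3) (y := -(b * y ^ 3)) (by rwa [sub_neg_eq_add, Valuation.map_neg])
  refine ⟨-(y * t / x), ?_⟩
  field_simp
  linear_combination ht

variable {P β : L}

theorem inv_iff_exists_eq_cube (h3 : hv.v (3 : L) = 1) (hP : ∀ s, hv.v P ≠ hv.v s ^ 3)
    (hβ : hv.v β = 1) : DiagonalCubicHasPoint β β⁻¹ P ↔ ∃ g, β = g ^ 3 := by
  have hβ0 : β ≠ 0 := by rintro rfl; simp at hβ
  rw [iff_exists_eq_mul_cube h3 hβ0 (by simp [hβ]) (by simpa [hβ] using hP)]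
  refine ⟨fun ⟨t, ht⟩ ↦ ⟨β / t, ?_⟩, fun ⟨g, hg⟩ ↦ ⟨g ^ 2, ?_⟩⟩
  · have ht0 : t ≠ 0 := by rintro rfl; simp [hβ0] at ht
    field_simp at ht ⊢
    linear_combination -ht
  · field_simp
    rw [hg]
    ring

theorem mul_inv_iff_exists_eq_cube (h3 : hv.v (3 : L) = 1) (hP : ∀ s, hv.v P ≠ hv.v s ^ 3)
    (hβ : hv.v β = 1) : DiagonalCubicHasPoint (P * β) (P * β)⁻¹ P ↔ ∃ g, β = g ^ 3 := by
  have hβ0 : β ≠ 0 := by rintro rfl; simp at hβ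
  have hP0 : P ≠ 0 := by rintro rfl; simpa using hP 0
  have hc (s : L) : hv.v (-(P * β)⁻¹) ≠ hv.v (P * β) * hv.v s ^ 3 := fun hs ↦ by
    refine hP (P * s) ?_
    have hvP : hv.v P ≠ 0 := by simpa
    simp only [Valuation.map_neg, map_inv₀, map_mul, hβ, mul_one] at hs ⊢
    field_simp at hs
    rw [mul_pow, pow_succ', mul_assoc, ← hs, mul_one]
  rw [swap_right_iff, iff_exists_eq_mul_cube h3 (mul_ne_zero hP0 hβ0) (by simp [hβ]) hc]
  refine ⟨fun ⟨t, ht⟩ ↦ ⟨-t, mul_left_cancel₀ hP0 ?_⟩, fun ⟨g, hg⟩ ↦ ⟨-g, ?_⟩⟩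
  · linear_combination ht
  · rw [hg]
    ring

theorem zpow_mul_inv_iff_exists_eq_cube (h3 : hv.v (3 : L) = 1)
    (hP : ∀ s, hv.v P ≠ hv.v s ^ 3) (hβ : hv.v β = 1) {a : L} (ha : a ≠ 0) (m : ℤ) :
    DiagonalCubicHasPoint (P ^ m * β) (P ^ m * β)⁻¹ (P * a ^ 3) ↔ ∃ g, β = g ^ 3 := by
  have hP0 : P ≠ 0 := by rintro rfl; simpa using hP 0
  have drop_cube (α : L) (k : ℤ) (hα : P ^ m * β = α * (P ^ k) ^ 3) :
      DiagonalCubicHasPoint (P ^ m * β) (P ^ m * β)⁻¹ (P * a ^ 3) ↔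
        DiagonalCubicHasPoint α α⁻¹ P := by
    rw [hα, mul_inv, ← inv_pow]
    exact mul_cube_iff (zpow_ne_zero _ hP0) (inv_ne_zero (zpow_ne_zero _ hP0)) ha
  obtain ⟨k, rfl | rfl | rfl⟩ : ∃ k : ℤ, m = 3 * k ∨ m = 1 + 3 * k ∨ m = -1 + 3 * k :=
    ⟨(m + 1) / 3, by omega⟩
  · rw [drop_cube β k (by rw [mul_comm, zpow_mul', zpow_ofNat]), inv_iff_exists_eq_cube h3 hP hβ]
  · rw [drop_cube (P * β) k (by rw [zpow_one_add₀ hP0, zpow_mul', zpow_ofNat]; ring),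
      mul_inv_iff_exists_eq_cube h3 hP hβ]
  · rw [drop_cube (P * β⁻¹)⁻¹ k (by
      rw [zpow_add₀ hP0, zpow_mul', zpow_ofNat, zpow_neg_one, mul_inv, inv_inv]; ring),
      inv_inv, swap_iff, mul_inv_iff_exists_eq_cube h3 hP (by simp [hβ])]
    exact ⟨fun ⟨g, hg⟩ ↦ ⟨g⁻¹, by rw [inv_pow, ← hg, inv_inv]⟩,
      fun ⟨g, hg⟩ ↦ ⟨g⁻¹, by rw [inv_pow, hg]⟩⟩

end DiagonalCubicHasPoint

end DiagonalCubic

section AdicCompletion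

open WithZero IsLocalRing

theorem exp_neg_one_ne_pow {n : ℕ} (hn : n ≠ 1) (γ : ℤᵐ⁰) : exp (-1 : ℤ) ≠ γ ^ n := by
  intro h
  have hγ : (n : ℤ) * log γ = -1 := by
    rw [← nsmul_eq_mul, ← log_pow, ← h, log_exp]
  have hdvd : (n : ℤ) ∣ 1 := ⟨-log γ, by linarith⟩
  exact hn (by exact_mod_cast Int.eq_one_of_dvd_one (Nat.cast_nonneg n) hdvd)

variable {R : Type*} [CommRing R] [IsDedekindDomain R] (K : Type*) [Field K] [Algebra R K]
  [IsFractionRing R K] (v : HeightOneSpectrum R)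

-- The library states this for the coercion into the completion, which `rw` does not identify with
-- `algebraMap`.
theorem valued_algebraMap_eq_valuation (x : K) :
    Valued.v (algebraMap K (v.adicCompletion K) x) = v.valuation K x :=
  HeightOneSpectrum.valuedAdicCompletion_eq_valuation' v x

theorem valued_algebraMap_eq_intValuation (r : R) :
    Valued.v (algebraMap R (v.adicCompletion K) r) = v.intValuation r := by
  rw [IsScalarTower.algebraMap_apply R K, valued_algebraMap_eq_valuation,
    HeightOneSpectrum.valuation_of_algebraMap]

variable {v}

theorem valued_algebraMap_eq_one {r : R} (hr : r ∉ v.asIdeal) :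
    Valued.v (algebraMap R (v.adicCompletion K) r) = 1 := by
  rwa [valued_algebraMap_eq_intValuation, HeightOneSpectrum.intValuation_eq_one_iff]

theorem valued_natCast_eq_one {n : ℕ} (hn : (n : R) ∉ v.asIdeal) :
    Valued.v (n : v.adicCompletion K) = 1 := by
  rw [← map_natCast (algebraMap R _), valued_algebraMap_eq_one K hn]

theorem residue_algebraMap_eq_zero_iff {r : R} :
    residue (v.adicCompletionIntegers K) (algebraMap R _ r) = 0 ↔ r ∈ v.asIdeal := by
  rw [residue_eq_zero_iff, ← v.intValuation_lt_one_iff_mem, ← valued_algebraMap_eq_intValuation K]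
  exact Valuation.mem_maximalIdeal_iff ..

theorem exists_residue_algebraMap_eq (x : ResidueField (v.adicCompletionIntegers K)) :
    ∃ r : R, residue (v.adicCompletionIntegers K) (algebraMap R _ r) = x := by
  obtain ⟨⟨x, hx⟩, rfl⟩ := residue_surjective x
  have hx_nhds : {y : v.adicCompletion K | Valued.v (y - x) < 1} ∈ nhds x :=
    Valued.mem_nhds.mpr ⟨1, fun y hy ↦ (Valuation.restrict_lt_one_iff Valued.v).mp hy⟩
  obtain ⟨k, hk : Valued.v (algebraMap K _ k - x) < 1⟩ :=
    (v.denseRange_algebraMap (K := K)).mem_nhds hx_nhds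
  have hk1 : v.valuation K k ≤ 1 := by
    rw [← valued_algebraMap_eq_valuation,
      ← sub_add_cancel (algebraMap K (v.adicCompletion K) k) x]
    exact Valuation.map_add_le _ hk.le hx
  obtain ⟨r, hr⟩ := v.exists_valuation_sub_lt_of_integer hk1 1
  have hrk : Valued.v (algebraMap R (v.adicCompletion K) r - algebraMap K _ k) < 1 := by
    rwa [IsScalarTower.algebraMap_apply R K, ← map_sub, valued_algebraMap_eq_valuation]
  have hrx : Valued.v (algebraMap R (v.adicCompletion K) r - x) < 1 := by
    rw [← sub_add_sub_cancel _ (algebraMap K _ k) x]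
    exact Valuation.map_add_lt _ hrk hk
  refine ⟨r, ?_⟩
  rw [← sub_eq_zero, ← map_sub, residue_eq_zero_iff]
  exact (Valuation.mem_maximalIdeal_iff ..).mpr hrx

theorem exists_algebraMap_eq_pow_iff {n : ℕ} (hn : (n : R) ∉ v.asIdeal) {β : R}
    (hβ : β ∉ v.asIdeal) :
    (∃ g, algebraMap R (v.adicCompletion K) β = g ^ n) ↔
      ∃ d, Ideal.Quotient.mk v.asIdeal β = d ^ n := by
  have hn1 := valued_natCast_eq_one K hn
  constructor
  · rintro ⟨g, hg⟩
    have hg1 : Valued.v g ≤ 1 := by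
      have hgn : Valued.v g ^ n = 1 := by rw [← map_pow, ← hg, valued_algebraMap_eq_one K hβ]
      exact (pow_le_one_iff (by rintro rfl; simp at hn1)).mp hgn.le
    obtain ⟨r, hr⟩ := exists_residue_algebraMap_eq K
      (residue (v.adicCompletionIntegers K) ⟨g, hg1⟩)
    refine ⟨Ideal.Quotient.mk _ r, ?_⟩
    rw [← map_pow, Ideal.Quotient.eq, ← residue_algebraMap_eq_zero_iff K, map_sub, map_sub,
      map_pow, map_pow, hr, ← map_pow, sub_eq_zero]
    congr 1
    exact Subtype.ext hg
  · rintro ⟨d, hd⟩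
    obtain ⟨r, rfl⟩ := Ideal.Quotient.mk_surjective d
    rw [← map_pow, Ideal.Quotient.eq, ← v.intValuation_lt_one_iff_mem,
      ← valued_algebraMap_eq_intValuation K, ← valued_algebraMap_eq_one K hβ, map_sub,
      Valuation.map_sub_swap] at hd
    rw [← Valuation.map_eq_of_sub_lt _ hd, Valuation.map_sub_swap] at hd
    obtain ⟨t, ht⟩ := exists_eq_mul_pow_of_valuation_sub_lt hn1 hd
    exact ⟨algebraMap R _ r * t, by rw [ht, map_pow, mul_pow]⟩

theorem exists_algebraMap_eq_mul_pow {n : ℕ} (hn : (n : R) ∉ v.asIdeal) {π c A : R}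
    (hπ : v.intValuation π = exp (-1 : ℤ)) (hc : c ∉ v.asIdeal)
    (hA : A - π * c ^ n ∈ v.asIdeal ^ 2) :
    ∃ a ≠ 0, algebraMap R (v.adicCompletion K) A = algebraMap R _ π * a ^ n := by
  have hn1 := valued_natCast_eq_one K hn
  have hn0 : n ≠ 0 := by rintro rfl; simp at hn1
  have hπc : v.intValuation (π * c ^ n) = exp (-1 : ℤ) := by
    rw [map_mul, map_pow, HeightOneSpectrum.intValuation_eq_one_iff.mpr hc, one_pow, mul_one, hπ]
  have hlt : v.intValuation (A - π * c ^ n) < v.intValuation (π * c ^ n) := by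
    rw [hπc]
    exact ((v.intValuation_le_pow_iff_mem _ 2).mpr hA).trans_lt (exp_lt_exp.mpr (by decide))
  have hA0 : algebraMap R (v.adicCompletion K) A ≠ 0 := by
    rw [← (Valued.v).ne_zero_iff, valued_algebraMap_eq_intValuation,
      Valuation.map_eq_of_sub_lt _ hlt, hπc]
    exact exp_ne_zero
  rw [← valued_algebraMap_eq_intValuation K, ← valued_algebraMap_eq_intValuation K, map_sub] at hlt
  obtain ⟨t, ht⟩ := exists_eq_mul_pow_of_valuation_sub_lt hn1 hlt
  rw [map_mul, map_pow, mul_assoc, ← mul_pow] at ht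
  exact ⟨_, fun h ↦ hA0 (by rw [ht, h, zero_pow hn0, mul_zero]), ht⟩

theorem adicCompletion_diagonalCubicHasPoint_iff (h3 : (3 : R) ∉ v.asIdeal) {π c A β : R}
    (hπ : v.intValuation π = exp (-1 : ℤ)) (hc : c ∉ v.asIdeal)
    (hA : A - π * c ^ 3 ∈ v.asIdeal ^ 2) (hβ : β ∉ v.asIdeal) (m : ℕ) :
    DiagonalCubicHasPoint (algebraMap R (v.adicCompletion K) (π ^ m * β))
        (algebraMap R _ (π ^ m * β))⁻¹ (algebraMap R _ A) ↔
      ∃ d, Ideal.Quotient.mk v.asIdeal β = d ^ 3 := by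
  obtain ⟨a, ha0, ha⟩ := exists_algebraMap_eq_mul_pow K (n := 3) h3 hπ hc hA
  have hπ_not_cube (s : v.adicCompletion K) :
      Valued.v (algebraMap R (v.adicCompletion K) π) ≠ Valued.v s ^ 3 := by
    rw [valued_algebraMap_eq_intValuation, hπ]
    exact exp_neg_one_ne_pow (by decide) _
  have h3v : Valued.v (3 : v.adicCompletion K) = 1 := valued_natCast_eq_one K (n := 3) h3
  rw [← exists_algebraMap_eq_pow_iff K (n := 3) h3 hβ, map_mul, map_pow, ha, ← zpow_natCast]
  exact DiagonalCubicHasPoint.zpow_mul_inv_iff_exists_eq_cube h3v hπ_not_cube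
    (valued_algebraMap_eq_one K hβ) ha0 m

end AdicCompletion

section InertPrime

theorem exists_eq_pow_of_coprime_sub_one {p n : ℕ} [Fact p.Prime] (hpn : (p - 1).Coprime n)
    {b : ZMod p} (hb : b ≠ 0) : ∃ c ≠ 0, b = c ^ n := by
  have hcard : (Nat.card (ZMod p)ˣ).Coprime n := by
    rwa [Nat.card_eq_fintype_card, ZMod.card_units]
  obtain ⟨u, hu⟩ := (powCoprime hcard).surjective (Units.mk0 b hb)
  exact ⟨u, u.ne_zero, by simpa using congrArg Units.val hu.symm⟩

theorem exists_sq_dvd_sub_mul_pow {p n : ℕ} (hp : p.Prime) (hpn : (p - 1).Coprime n) {A : ℤ}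
    (hpA : (p : ℤ) ∣ A) (hpA2 : ¬(p : ℤ) ^ 2 ∣ A) :
    ∃ c : ℤ, ¬(p : ℤ) ∣ c ∧ (p : ℤ) ^ 2 ∣ A - p * c ^ n := by
  have : Fact p.Prime := ⟨hp⟩
  obtain ⟨B, rfl⟩ := hpA
  have hB : (B : ZMod p) ≠ 0 := by
    rw [Ne, ZMod.intCast_zmod_eq_zero_iff_dvd]
    exact fun h ↦ hpA2 (sq (p : ℤ) ▸ mul_dvd_mul_left _ h)
  obtain ⟨d, hd0, hd⟩ := exists_eq_pow_of_coprime_sub_one hpn hB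
  obtain ⟨c, rfl⟩ := ZMod.intCast_surjective d
  refine ⟨c, mt (ZMod.intCast_zmod_eq_zero_iff_dvd c p).mpr hd0, ?_⟩
  rw [← mul_sub, sq]
  refine mul_dvd_mul_left _ ((ZMod.intCast_zmod_eq_zero_iff_dvd _ p).mp ?_)
  rw [Int.cast_sub, Int.cast_pow, hd, sub_self]

theorem intCast_mem_span_natCast_iff {R : Type*} [CommRing R] {p : ℕ} (hp : p.Prime)
    (hpR : (p : R) ∈ nonunits R) (a : ℤ) : (a : R) ∈ Ideal.span {(p : R)} ↔ (p : ℤ) ∣ a := by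
  have : Fact p.Prime := ⟨hp⟩
  have := CharP.quotient R p hpR
  rw [← Ideal.Quotient.eq_zero_iff_mem, map_intCast, CharP.intCast_eq_zero_iff _ p]

theorem stmt5_general {R K : Type*} [CommRing R] [IsDedekindDomain R] [Field K]
    [Algebra R K] [IsFractionRing R K] (A : ℤ) (p : ℕ) (hp : p.Prime) (hp3 : p % 3 = 2)
    (hpin : Prime (p : R)) (hpA : (p : ℤ) ∣ A) (hpA2 : ¬(p : ℤ) ^ 2 ∣ A) (α : R) (m : ℕ) (β : R)
    (hαβ : α = (p : R) ^ m * β) (hpβ : ¬(p : R) ∣ β) :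
    DiagonalCubicHasPoint (algebraMap R ((primeSpec hpin).adicCompletion K) α)
        (algebraMap R ((primeSpec hpin).adicCompletion K) α)⁻¹
        (algebraMap K ((primeSpec hpin).adicCompletion K) (A : K)) ↔
      ∃ c : R ⧸ Ideal.span {(p : R)}, Ideal.Quotient.mk (Ideal.span {(p : R)}) β = c ^ 3 := by
  have intCast_mem (a : ℤ) : (a : R) ∈ (primeSpec hpin).asIdeal ↔ (p : ℤ) ∣ a :=
    intCast_mem_span_natCast_iff hp hpin.not_isUnit a
  have h3 : (3 : R) ∉ (primeSpec hpin).asIdeal := by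
    have hp_dvd : ¬p ∣ 3 := by
      rw [Nat.prime_dvd_prime_iff_eq hp Nat.prime_three]
      omega
    exact_mod_cast mt (intCast_mem 3).mp (by exact_mod_cast hp_dvd)
  have hp_coprime : (p - 1).Coprime 3 :=
    ((Nat.Prime.coprime_iff_not_dvd Nat.prime_three).mpr (by omega)).symm
  obtain ⟨c, hpc, hc⟩ := exists_sq_dvd_sub_mul_pow hp hp_coprime hpA hpA2
  have hA : (A : R) - p * c ^ 3 ∈ (primeSpec hpin).asIdeal ^ 2 := by
    rw [primeSpec, Ideal.span_singleton_pow, Ideal.mem_span_singleton]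
    simpa using map_dvd (Int.castRingHom R) hc
  rw [hαβ, ← map_intCast (algebraMap R K), ← IsScalarTower.algebraMap_apply]
  exact adicCompletion_diagonalCubicHasPoint_iff K h3
    (HeightOneSpectrum.intValuation_singleton _ hpin.ne_zero rfl) (mt (intCast_mem c).mp hpc) hA
    (mt Ideal.mem_span_singleton.mp hpβ) m

end InertPrime

/-- Lemma 2.4: if `A ∈ ℤ ∖ {0, ±1}` is cube-free, `α ∈ ℤ[ζ₃]` is a nonzero
cube-free integer, and `p ≡ 2 (mod 3)` is a rational prime (hence inert in `ℤ[ζ₃]`) with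
`p ‖ A`, writing `α = p^m · β` with `p ∤ β` (so `m = v_p(α)`), then `C_{A,α}(k_p) ≠ ∅` iff
the image of `β = α·p^{-v_p(α)}` in the residue field `ℤ[ζ₃]/(p) ≅ 𝔽_{p²}` is a cube. -/
theorem stmt5 (K : Type*) [Field K] [NumberField K] [IsCyclotomicExtension {3} ℚ K]
    (A : ℤ) (hA0 : A ≠ 0) (hA1 : A ≠ 1) (hA1' : A ≠ -1)
    (hAcf : ∀ p : ℤ, Prime p → ¬ p ^ 3 ∣ A)
    (α : 𝓞 K) (hα0 : α ≠ 0) (hαcf : ∀ p : 𝓞 K, Prime p → ¬ p ^ 3 ∣ α)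
    (p : ℕ) (hp : p.Prime) (hp3 : p % 3 = 2)
    (hpin : Prime ((p : 𝓞 K)))
    (hpA : (p : ℤ) ∣ A) (hpA2 : ¬ (p : ℤ) ^ 2 ∣ A)
    (m : ℕ) (β : 𝓞 K) (hαβ : α = (p : 𝓞 K) ^ m * β) (hpβ : ¬ (p : 𝓞 K) ∣ β) :
    (∃ x y z : (primeSpec hpin).adicCompletion K,
        ¬(x = 0 ∧ y = 0 ∧ z = 0) ∧
        algebraMap (𝓞 K) ((primeSpec hpin).adicCompletion K) α * x ^ 3
          + (algebraMap (𝓞 K) ((primeSpec hpin).adicCompletion K) α)⁻¹ * y ^ 3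
          = algebraMap K ((primeSpec hpin).adicCompletion K) (A : K) * z ^ 3)
      ↔ ∃ c : 𝓞 K ⧸ Ideal.span {(p : 𝓞 K)},
          Ideal.Quotient.mk (Ideal.span {(p : 𝓞 K)}) β = c ^ 3 :=
  stmt5_general A p hp hp3 hpin hpA hpA2 α m β hαβ hpβ
end
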